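/- Let V, W ⊆ S^d be equivalent polybox codes with |V| = |W| = n, and suppose that every two equivalent polybox codes in S^d with n−1 words are strongly equivalent. If there exist w ∈ W and a code V̄ obtained from V by gluing and cutting with w ∈ V̄, then V and W are strongly equivalent. -/

import Mathlib

/- Common framework: polybox codes over a finite alphabet `S` with a
complementation `c : S → S` (an involution without fixed points). -/

namespace PolyboxPaper

variable {S : Type} [Fintype S] [DecidableEq S] {d : ℕ}

/-- Two words are dichotomous: they differ by complementation at some position. -/
def Dich (c : S → S) (v w : Fin d → S) : Prop := ∃ i, v i = c (w i)

instance (c : S → S) (v w : Fin d → S) : Decidable (Dich c v w) :=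
  decidable_of_iff (∃ i, v i = c (w i)) Iff.rfl

/-- A polybox code: every two distinct words are dichotomous. -/
def IsCode (c : S → S) (V : Finset (Fin d → S)) : Prop :=
  ∀ v ∈ V, ∀ w ∈ V, v ≠ w → Dich c v w

/-- A cube tiling code: a polybox code with `2 ^ d` words. -/
def CubeTiling (c : S → S) (V : Finset (Fin d → S)) : Prop :=
  IsCode c V ∧ V.card = 2 ^ d

/-- `v` and `w` form a twin pair in the `i`-th direction. -/
def TwinPair (c : S → S) (v w : Fin d → S) (i : Fin d) : Prop :=
  v i = c (w i) ∧ ∀ j, j ≠ i → v j = w j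

/-- A code is twin pair free if no two of its words form a twin pair. -/
def TwinPairFree (c : S → S) (V : Finset (Fin d → S)) : Prop :=
  ∀ v ∈ V, ∀ w ∈ V, ∀ i, ¬ TwinPair c v w i

/-- A single glue-and-cut operation: a twin pair `v, w` of `V` in the `i`-th
direction is replaced by a twin pair `q, t` in the `i`-th direction agreeing
with `v` (and `w`) at all positions `j ≠ i`. -/
def GCStep (c : S → S) (V W : Finset (Fin d → S)) : Prop :=
  ∃ (v w q t : Fin d → S) (i : Fin d), v ∈ V ∧ w ∈ V ∧ TwinPair c v w i ∧
    TwinPair c q t i ∧ (∀ j, j ≠ i → q j = v j) ∧ W = (V \ {v, w}) ∪ {q, t}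

/-- `W` is obtained from `V` by gluing and cutting (finite, possibly empty,
sequence of single glue-and-cut operations); equivalently, `V` and `W` are
strongly equivalent. -/
def GC (c : S → S) (V W : Finset (Fin d → S)) : Prop :=
  Relation.ReflTransGen (GCStep c) V W

/-- Passing from `V` to `W` by gluing and cutting keeping `Q` fixed:
every intermediate code contains `Q`. -/
def GCFix (c : S → S) (Q V W : Finset (Fin d → S)) : Prop :=
  Relation.ReflTransGen (fun A B => GCStep c A B ∧ Q ⊆ B) V W

/-- A realization: for each coordinate a map `f i : S → Set (X i)` taking
nonempty proper values and sending complementary letters to complementary sets. -/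
def IsRealization (c : S → S) (X : Fin d → Type) (f : ∀ i, S → Set (X i)) : Prop :=
  ∀ i s, (f i s).Nonempty ∧ f i s ≠ Set.univ ∧ f i (c s) = (f i s)ᶜ

/-- The box associated to a word by a realization. -/
def box {X : Fin d → Type} (f : ∀ i, S → Set (X i)) (v : Fin d → S) :
    Set (∀ i, X i) :=
  {x | ∀ i, x i ∈ f i (v i)}

/-- The word `w` is covered by the code `V` (`w ⊑ V`). -/
def CoveredWord (c : S → S) (w : Fin d → S) (V : Finset (Fin d → S)) : Prop :=
  ∀ (X : Fin d → Type) (f : ∀ i, S → Set (X i)), IsRealization c X f →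
    box f w ⊆ ⋃ v ∈ V, box f v

/-- `V ⊑ W`: every word of `V` is covered by `W`. -/
def Covered (c : S → S) (V W : Finset (Fin d → S)) : Prop :=
  ∀ v ∈ V, CoveredWord c v W

/-- Equivalent codes: `V ⊑ W` and `W ⊑ V`. -/
def Equivalent (c : S → S) (V W : Finset (Fin d → S)) : Prop :=
  Covered c V W ∧ Covered c W V

/-- `V ⊑̇ W`: `V ⊑ W` and no word of `V` belongs to any code obtained from `W`
by gluing and cutting. -/
def DotCovered (c : S → S) (V W : Finset (Fin d → S)) : Prop :=
  Covered c V W ∧ ∀ v ∈ V, ∀ W', GC c W W' → v ∉ W'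

/-- The density `δ(V, W)`. -/
noncomputable def delta (c : S → S) (V W : Finset (Fin d → S)) : ℕ∞ :=
  W.inf fun w => ((V.filter fun v => ¬ Dich c v w).card : ℕ∞)

/-- `C` is a minimal cover of the word `w`. -/
def MinCoverWord (c : S → S) (C : Finset (Fin d → S)) (w : Fin d → S) : Prop :=
  IsCode c C ∧ CoveredWord c w C ∧ ∀ q ∈ C, ¬ Dich c q w

/-- `C` is a minimal cover of the code `P`. -/
def MinCoverCode (c : S → S) (C P : Finset (Fin d → S)) : Prop :=
  IsCode c C ∧ Covered c P C ∧ ∀ q ∈ C, ∃ p ∈ P, ¬ Dich c q p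

/-- A simple polybox code. -/
def SimpleCode (c : S → S) (V : Finset (Fin d → S)) : Prop :=
  ∀ i : Fin d, ∃ s : S, ∀ v ∈ V, v i = s ∨ v i = c s

/-- A simple cube tiling code `{s₁, s₁'} × ⋯ × {s_d, s_d'}`. -/
def SimpleCubeTiling (c : S → S) (U : Finset (Fin d → S)) : Prop :=
  ∃ s : Fin d → S, ∀ v : Fin d → S, v ∈ U ↔ ∀ i, v i = s i ∨ v i = c (s i)

/-- Word whose first four coordinates are `x0 x1 x2 x3` and which agrees with
`r` elsewhere. -/
def specialWord (r : Fin d → S) (x0 x1 x2 x3 : S) : Fin d → S := fun i =>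
  if (i : ℕ) = 0 then x0 else if (i : ℕ) = 1 then x1 else if (i : ℕ) = 2 then x2
  else if (i : ℕ) = 3 then x3 else r i

/-- The special pair of 12-word codes (Theorem 1 of the paper). -/
def SpecialPair (c : S → S) (V W : Finset (Fin d → S)) : Prop :=
  ∃ (a b : S) (r : Fin d → S), a ≠ b ∧ a ≠ c b ∧
    V = {specialWord r a (c a) b (c b), specialWord r a b (c b) a,
         specialWord r a (c b) (c b) (c b), specialWord r (c a) a (c b) (c b),
         specialWord r (c a) (c a) a (c b), specialWord r (c a) b (c b) b,
         specialWord r b a b (c b), specialWord r b b b b,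
         specialWord r b (c b) (c a) b, specialWord r (c b) a b (c a),
         specialWord r (c b) (c a) b b, specialWord r (c b) (c b) (c b) b} ∧
    W = {specialWord r (c a) (c a) (c a) b, specialWord r (c a) b a (c a),
         specialWord r b a (c a) a, specialWord r a (c a) (c a) a,
         specialWord r (c a) a (c a) (c a), specialWord r a b b (c a),
         specialWord r b b a a, specialWord r a (c b) (c a) (c a),
         specialWord r (c b) a (c b) a, specialWord r (c b) (c a) a a,
         specialWord r (c b) (c b) a (c a), specialWord r b (c b) a (c b)}

/-- An isomorphism of `S^d`: a permutation of coordinates followed by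
position bijections commuting with complementation. -/
def IsIso (c : S → S) (Φ : (Fin d → S) → Fin d → S) : Prop :=
  ∃ (σ : Equiv.Perm (Fin d)) (h : Fin d → S → S),
    (∀ i, Function.Bijective (h i)) ∧ (∀ i s, h i (c s) = c (h i s)) ∧
    ∀ v i, Φ v i = h i (v (σ i))

/-- The pair `(V, W)` is, up to isomorphism, the special pair. -/
def SpecialPairUpToIso (c : S → S) (V W : Finset (Fin d → S)) : Prop :=
  ∃ Φ, IsIso c Φ ∧
    (SpecialPair c (V.image Φ) (W.image Φ) ∨ SpecialPair c (W.image Φ) (V.image Φ))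

/-!
A glue-and-cut step replaces a twin pair by another twin pair that agrees with it off one direction
`i`. What the two boxes cover together, and which words are dichotomous to both words, depends only
on the coordinates other than `i`. So a step changes neither the union of the boxes nor the words
dichotomous to the whole code, and `V̄` is a code with `n` words equivalent to `W`. Since the boxes
of a code are disjoint, erasing the common word `w` from `V̄` and from `W` leaves equivalent codes
with `n - 1` words, which are strongly equivalent by hypothesis. As `w` stays dichotomous to every
word of every intermediate code, it can be added back along the whole sequence of steps.
-/

section

variable {α : Type} {c : α → α} {u v w q t : Fin d → α} {i : Fin d}

section Words

theorem Dich.symm (hc : Function.Involutive c) (h : Dich c v w) : Dich c w v := by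
  obtain ⟨i, hi⟩ := h
  exact ⟨i, by rw [hi, hc]⟩

theorem Dich.ne (hc' : ∀ s, c s ≠ s) (h : Dich c v w) : v ≠ w := by
  rintro rfl
  obtain ⟨i, hi⟩ := h
  exact hc' _ hi.symm

theorem TwinPair.dich (h : TwinPair c v w i) : Dich c v w := ⟨i, h.1⟩

theorem TwinPair.dich_and_dich_iff (hc : Function.Involutive c) (hc' : ∀ s, c s ≠ s)
    (h : TwinPair c v w i) : Dich c u v ∧ Dich c u w ↔ ∃ j, j ≠ i ∧ u j = c (v j) := by
  constructor
  · rintro ⟨⟨j, hj⟩, k, hk⟩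
    by_cases hji : j = i
    · by_cases hki : k = i
      · subst hji hki
        have hw : u k = w k := by rw [hj, h.1, hc]
        exact absurd (hk.symm.trans hw) (hc' _)
      · exact ⟨k, hki, by rw [hk, h.2 k hki]⟩
    · exact ⟨j, hji, hj⟩
  · rintro ⟨j, hji, hj⟩
    exact ⟨⟨j, hj⟩, j, by rw [hj, h.2 j hji]⟩

theorem TwinPair.dich_and_dich_congr (hc : Function.Involutive c) (hc' : ∀ s, c s ≠ s)
    (hvw : TwinPair c v w i) (hqt : TwinPair c q t i) (hqv : ∀ j, j ≠ i → q j = v j) :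
    Dich c u q ∧ Dich c u t ↔ Dich c u v ∧ Dich c u w := by
  rw [hvw.dich_and_dich_iff hc hc', hqt.dich_and_dich_iff hc hc']
  refine exists_congr fun j => and_congr_right fun hj => ?_
  rw [hqv j hj]

end Words

section Boxes

variable {X : Fin d → Type} {f : ∀ i, α → Set (X i)} {U V W : Finset (Fin d → α)}

theorem Dich.disjoint_box (hf : IsRealization c X f) (h : Dich c v w) :
    Disjoint (box f v) (box f w) := by
  obtain ⟨i, hi⟩ := h
  refine Set.disjoint_left.2 fun x hxv hxw => ?_
  have hxi : x i ∈ f i (v i) := hxv i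
  rw [hi, (hf i (w i)).2.2] at hxi
  exact hxi (hxw i)

theorem TwinPair.box_union_box (hf : IsRealization c X f) (h : TwinPair c v w i) :
    box f v ∪ box f w = {x | ∀ j, j ≠ i → x j ∈ f j (v j)} := by
  ext x
  constructor
  · rintro (hx | hx) j hj
    · exact hx j
    · rw [h.2 j hj]
      exact hx j
  · intro hx
    by_cases hxi : x i ∈ f i (w i)
    · refine Or.inr fun j => ?_
      rcases eq_or_ne j i with rfl | hj
      · exact hxi
      · rw [← h.2 j hj]
        exact hx j hj
    · refine Or.inl fun j => ?_
      rcases eq_or_ne j i with rfl | hj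
      · rw [h.1, (hf j (w j)).2.2]
        exact hxi
      · exact hx j hj

theorem TwinPair.box_union_box_congr (hf : IsRealization c X f) (hvw : TwinPair c v w i)
    (hqt : TwinPair c q t i) (hqv : ∀ j, j ≠ i → q j = v j) :
    box f q ∪ box f t = box f v ∪ box f w := by
  rw [hvw.box_union_box hf, hqt.box_union_box hf]
  ext x
  refine forall₂_congr fun j hj => ?_
  rw [hqv j hj]

theorem equivalent_iff_biUnion_box_eq :
    Equivalent c V W ↔ ∀ (X : Fin d → Type) (f : ∀ i, α → Set (X i)), IsRealization c X f →
      ⋃ v ∈ V, box f v = ⋃ w ∈ W, box f w := by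
  constructor
  · rintro ⟨hVW, hWV⟩ X f hf
    exact (Set.iUnion₂_subset fun v hv => hVW v hv X f hf).antisymm
      (Set.iUnion₂_subset fun w hw => hWV w hw X f hf)
  · intro h
    refine ⟨fun v hv X f hf => ?_, fun w hw X f hf => ?_⟩
    · rw [← h X f hf]
      exact Set.subset_biUnion_of_mem (u := box f) hv
    · rw [h X f hf]
      exact Set.subset_biUnion_of_mem (u := box f) hw

theorem Equivalent.trans (hUV : Equivalent c U V) (hVW : Equivalent c V W) :
    Equivalent c U W := by
  rw [equivalent_iff_biUnion_box_eq] at *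
  exact fun X f hf => (hUV X f hf).trans (hVW X f hf)

end Boxes

section Codes

variable {V W : Finset (Fin d → α)}

theorem IsCode.mono (hW : IsCode c W) (h : V ⊆ W) : IsCode c V :=
  fun v hv w hw => hW v (h hv) w (h hw)

variable [DecidableEq α]

theorem IsCode.biUnion_box_erase {X : Fin d → Type} {f : ∀ i, α → Set (X i)}
    (hf : IsRealization c X f) (hV : IsCode c V) (hw : w ∈ V) :
    ⋃ v ∈ V.erase w, box f v = (⋃ v ∈ V, box f v) \ box f w := by
  have hdisj : Disjoint (box f w) (⋃ v ∈ V.erase w, box f v) :=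
    Set.disjoint_iUnion₂_right.2 fun v hv =>
      (hV w hw v (Finset.mem_of_mem_erase hv) (Finset.ne_of_mem_erase hv).symm).disjoint_box hf
  conv_rhs => rw [← Finset.insert_erase hw, Finset.set_biUnion_insert]
  exact hdisj.sup_sdiff_cancel_left.symm

theorem Equivalent.erase (h : Equivalent c V W) (hV : IsCode c V) (hW : IsCode c W)
    (hwV : w ∈ V) (hwW : w ∈ W) : Equivalent c (V.erase w) (W.erase w) := by
  rw [equivalent_iff_biUnion_box_eq] at h ⊢
  intro X f hf
  rw [hV.biUnion_box_erase hf hwV, hW.biUnion_box_erase hf hwW, h X f hf]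

theorem IsCode.dich_and_dich_of_mem_sdiff (hc : Function.Involutive c) (hc' : ∀ s, c s ≠ s)
    (hV : IsCode c V) (hv : v ∈ V) (hw : w ∈ V) (hvw : TwinPair c v w i)
    (hqt : TwinPair c q t i) (hqv : ∀ j, j ≠ i → q j = v j) (hu : u ∈ V \ {v, w}) :
    Dich c u q ∧ Dich c u t := by
  simp only [Finset.mem_sdiff, Finset.mem_insert, Finset.mem_singleton, not_or] at hu
  exact (hvw.dich_and_dich_congr hc hc' hqt hqv).2
    ⟨hV u hu.1 v hv hu.2.1, hV u hu.1 w hw hu.2.2⟩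

end Codes

section GlueAndCut

variable [DecidableEq α] {V W : Finset (Fin d → α)}

theorem GCStep.biUnion_box_eq {X : Fin d → Type} {f : ∀ i, α → Set (X i)}
    (hf : IsRealization c X f) (h : GCStep c V W) :
    ⋃ v ∈ V, box f v = ⋃ w ∈ W, box f w := by
  obtain ⟨v, w, q, t, i, hv, hw, hvw, hqt, hqv, rfl⟩ := h
  have hsub : {v, w} ⊆ V := Finset.insert_subset hv (Finset.singleton_subset_iff.2 hw)
  conv_lhs => rw [← Finset.sdiff_union_of_subset hsub]
  simp only [Finset.set_biUnion_union, Finset.set_biUnion_insert, Finset.set_biUnion_singleton,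
    hvw.box_union_box_congr hf hqt hqv]

theorem GCStep.forall_dich (hc : Function.Involutive c) (hc' : ∀ s, c s ≠ s)
    (h : GCStep c V W) (hu : ∀ v ∈ V, Dich c u v) : ∀ w ∈ W, Dich c u w := by
  obtain ⟨v, w, q, t, i, hv, hw, hvw, hqt, hqv, rfl⟩ := h
  have hdich : Dich c u q ∧ Dich c u t :=
    (hvw.dich_and_dich_congr hc hc' hqt hqv).2 ⟨hu v hv, hu w hw⟩
  simp only [Finset.mem_union, Finset.mem_sdiff, Finset.mem_insert, Finset.mem_singleton]
  rintro x (⟨hx, -⟩ | rfl | rfl)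
  exacts [hu x hx, hdich.1, hdich.2]

theorem GCStep.isCode (hc : Function.Involutive c) (hc' : ∀ s, c s ≠ s)
    (h : GCStep c V W) (hV : IsCode c V) : IsCode c W := by
  obtain ⟨v, w, q, t, i, hv, hw, hvw, hqt, hqv, rfl⟩ := h
  have hdich : ∀ u ∈ V \ {v, w}, Dich c u q ∧ Dich c u t := fun u hu =>
    hV.dich_and_dich_of_mem_sdiff hc hc' hv hw hvw hqt hqv hu
  intro x hx y hy hxy
  rw [Finset.mem_union, Finset.mem_insert, Finset.mem_singleton] at hx hy
  rcases hx with hx | rfl | rfl <;> rcases hy with hy | rfl | rfl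
  · exact hV.mono Finset.sdiff_subset x hx y hy hxy
  · exact (hdich x hx).1
  · exact (hdich x hx).2
  · exact (hdich y hy).1.symm hc
  · exact absurd rfl hxy
  · exact hqt.dich
  · exact (hdich y hy).2.symm hc
  · exact hqt.dich.symm hc
  · exact absurd rfl hxy

theorem GCStep.card_eq (hc : Function.Involutive c) (hc' : ∀ s, c s ≠ s)
    (h : GCStep c V W) (hV : IsCode c V) : W.card = V.card := by
  obtain ⟨v, w, q, t, i, hv, hw, hvw, hqt, hqv, rfl⟩ := h
  have hdisj : Disjoint (V \ {v, w}) {q, t} := by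
    refine Finset.disjoint_left.2 fun u hu huqt => ?_
    have hdich := hV.dich_and_dich_of_mem_sdiff hc hc' hv hw hvw hqt hqv hu
    rw [Finset.mem_insert, Finset.mem_singleton] at huqt
    exact huqt.elim (hdich.1.ne hc') (hdich.2.ne hc')
  have hsub : {v, w} ⊆ V := Finset.insert_subset hv (Finset.singleton_subset_iff.2 hw)
  calc (V \ {v, w} ∪ {q, t}).card
      = (V \ {v, w}).card + ({v, w} : Finset (Fin d → α)).card := by
        rw [Finset.card_union_of_disjoint hdisj, Finset.card_pair (hqt.dich.ne hc'),
          Finset.card_pair (hvw.dich.ne hc')]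
    _ = V.card := Finset.card_sdiff_add_card_eq_card hsub

theorem GCStep.insert_insert (h : GCStep c V W) (hu : u ∉ V) :
    GCStep c (insert u V) (insert u W) := by
  obtain ⟨v, w, q, t, i, hv, hw, hvw, hqt, hqv, rfl⟩ := h
  have hsub : {v, w} ⊆ V := Finset.insert_subset hv (Finset.singleton_subset_iff.2 hw)
  have hu_pair : u ∉ ({v, w} : Finset (Fin d → α)) := fun hmem => hu (hsub hmem)
  refine ⟨v, w, q, t, i, Finset.mem_insert_of_mem hv, Finset.mem_insert_of_mem hw, hvw, hqt,
    hqv, ?_⟩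
  rw [Finset.insert_sdiff_of_notMem _ hu_pair, Finset.insert_union]

theorem GC.equivalent (h : GC c V W) : Equivalent c V W := by
  refine equivalent_iff_biUnion_box_eq.2 fun X f hf => ?_
  induction h with
  | refl => rfl
  | tail _ hstep ih => exact ih.trans (hstep.biUnion_box_eq hf)

theorem GC.isCode (hc : Function.Involutive c) (hc' : ∀ s, c s ≠ s)
    (h : GC c V W) (hV : IsCode c V) : IsCode c W := by
  induction h with
  | refl => exact hV
  | tail _ hstep ih => exact hstep.isCode hc hc' ih

theorem GC.card_eq (hc : Function.Involutive c) (hc' : ∀ s, c s ≠ s)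
    (h : GC c V W) (hV : IsCode c V) : W.card = V.card := by
  induction h with
  | refl => rfl
  | tail hgc hstep ih => exact (hstep.card_eq hc hc' (GC.isCode hc hc' hgc hV)).trans ih

theorem GC.forall_dich (hc : Function.Involutive c) (hc' : ∀ s, c s ≠ s)
    (h : GC c V W) (hu : ∀ v ∈ V, Dich c u v) : ∀ w ∈ W, Dich c u w := by
  induction h with
  | refl => exact hu
  | tail _ hstep ih => exact hstep.forall_dich hc hc' ih

theorem GC.insert_insert (hc : Function.Involutive c) (hc' : ∀ s, c s ≠ s)
    (h : GC c V W) (hu : ∀ v ∈ V, Dich c u v) : GC c (insert u V) (insert u W) := by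
  induction h with
  | refl => exact Relation.ReflTransGen.refl
  | tail hgc hstep ih =>
    refine ih.tail (hstep.insert_insert fun hmem => ?_)
    exact (GC.forall_dich hc hc' hgc hu u hmem).ne hc' rfl

theorem GC.of_erase (hc : Function.Involutive c) (hc' : ∀ s, c s ≠ s) (hV : IsCode c V)
    (hwV : w ∈ V) (hwW : w ∈ W) (h : GC c (V.erase w) (W.erase w)) : GC c V W := by
  have hins : GC c (insert w (V.erase w)) (insert w (W.erase w)) :=
    h.insert_insert hc hc' fun v hv =>
      hV w hwV v (Finset.mem_of_mem_erase hv) (Finset.ne_of_mem_erase hv).symm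
  rwa [Finset.insert_erase hwV, Finset.insert_erase hwW] at hins

end GlueAndCut

end

theorem strongly_equivalent_of_common_word_general
    {S : Type} [DecidableEq S] (c : S → S)
    (hc : ∀ s, c (c s) = s) (hc' : ∀ s, c s ≠ s) {d : ℕ} (n : ℕ)
    (V W : Finset (Fin d → S)) (hV : IsCode c V) (hW : IsCode c W)
    (heq : Equivalent c V W) (hVn : V.card = n) (hWn : W.card = n)
    (hind : ∀ V' W' : Finset (Fin d → S), IsCode c V' → IsCode c W' →
      Equivalent c V' W' → V'.card = n - 1 → W'.card = n - 1 → GC c V' W')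
    (hex : ∃ w ∈ W, ∃ V' : Finset (Fin d → S), GC c V V' ∧ w ∈ V') :
    GC c V W := by
  obtain ⟨w, hwW, U, hVU, hwU⟩ := hex
  have hU : IsCode c U := hVU.isCode hc hc' hV
  have hUn : U.card = n := (hVU.card_eq hc hc' hV).trans hVn
  have hUW : Equivalent c U W := Equivalent.trans (And.symm hVU.equivalent) heq
  have herase : GC c (U.erase w) (W.erase w) :=
    hind _ _ (hU.mono (U.erase_subset w)) (hW.mono (W.erase_subset w))
      (hUW.erase hU hW hwU hwW)
      (by rw [Finset.card_erase_of_mem hwU, hUn]) (by rw [Finset.card_erase_of_mem hwW, hWn])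
  exact Relation.ReflTransGen.trans hVU (GC.of_erase hc hc' hU hwU hwW herase)

/-- Lemma "ind" of the paper. -/
theorem strongly_equivalent_of_common_word
    {S : Type} [Fintype S] [DecidableEq S] (c : S → S)
    (hc : ∀ s, c (c s) = s) (hc' : ∀ s, c s ≠ s) {d : ℕ} (n : ℕ)
    (V W : Finset (Fin d → S)) (hV : IsCode c V) (hW : IsCode c W)
    (heq : Equivalent c V W) (hVn : V.card = n) (hWn : W.card = n)
    (hind : ∀ V' W' : Finset (Fin d → S), IsCode c V' → IsCode c W' →
      Equivalent c V' W' → V'.card = n - 1 → W'.card = n - 1 → GC c V' W')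
    (hex : ∃ w ∈ W, ∃ V' : Finset (Fin d → S), GC c V V' ∧ w ∈ V') :
    GC c V W := by
  exact strongly_equivalent_of_common_word_general c hc hc' n V W hV hW heq hVn hWn hind hex

end PolyboxPaper
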